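/- A bipartite graph G has Ferrers dimension at most 3 (i.e., G is the intersection of three chain graphs) if and only if G admits a biadjacency matrix (i.e., orderings of its two vertex sides) that contains neither the pattern Γ = [[*,1,*],[1,0,1],[0,1,*]] nor the pattern Δ = [[1,*,*],[0,1,*],[1,0,1]] as a submatrix. -/

import Mathlib

/-- A bipartite graph (given by its biadjacency relation) is a chain graph:
neighborhoods of one side are totally ordered by inclusion. -/
def ChainGraph {m n : ℕ} (G : Fin m → Fin n → Bool) : Prop :=
  ∀ u u' : Fin m, (∀ v, G u v = true → G u' v = true) ∨ (∀ v, G u' v = true → G u v = true)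

/-- M contains the pattern Γ = [[*,1,*],[1,0,1],[0,1,*]]. -/
def ContainsGamma {m n : ℕ} (M : Fin m → Fin n → Bool) : Prop :=
  ∃ (i1 i2 i3 : Fin m) (j1 j2 j3 : Fin n),
    i1 < i2 ∧ i2 < i3 ∧ j1 < j2 ∧ j2 < j3 ∧
    M i1 j2 = true ∧ M i2 j1 = true ∧ M i2 j2 = false ∧ M i2 j3 = true ∧
    M i3 j1 = false ∧ M i3 j2 = true

/-- M contains the pattern Δ = [[1,*,*],[0,1,*],[1,0,1]]. -/
def ContainsDelta {m n : ℕ} (M : Fin m → Fin n → Bool) : Prop :=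
  ∃ (i1 i2 i3 : Fin m) (j1 j2 j3 : Fin n),
    i1 < i2 ∧ i2 < i3 ∧ j1 < j2 ∧ j2 < j3 ∧
    M i1 j1 = true ∧ M i2 j1 = false ∧ M i2 j2 = true ∧
    M i3 j1 = true ∧ M i3 j2 = false ∧ M i3 j3 = true

/-- Zeros having a one above and a one to the right. -/
def ZeroC {m n : ℕ} (M : Fin m → Fin n → Bool) (p : Fin m) (q : Fin n) : Prop :=
  M p q = false ∧ (∃ i, i < p ∧ M i q = true) ∧ (∃ j, q < j ∧ M p j = true)

theorem no_two {m n : ℕ} (M : Fin m → Fin n → Bool)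
    (hG : ¬ ContainsGamma M) (hD : ¬ ContainsDelta M) (p p' : Fin m) (q q' : Fin n)
    (hC : ZeroC M p q) (hC' : ZeroC M p' q') (h1 : M p q' = true) (h2 : M p' q = true) :
    False := by
  wlog hlt : p < p' generalizing p p' q q'
  · rcases eq_or_lt_of_le (not_lt.mp hlt) with h | h
    · subst h
      rw [hC.1] at h2
      exact absurd h2 (by decide)
    · exact this p' p q' q hC' hC h2 h1 h
  obtain ⟨z, ⟨i, hi, hiM⟩, ⟨j, hj, hjM⟩⟩ := hC
  obtain ⟨z', ⟨i', hi', hiM'⟩, ⟨j', hj', hjM'⟩⟩ := hC'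
  rcases lt_trichotomy q q' with h | h | h
  · exact hD ⟨i, p, p', q, q', j', hi, hlt, h, hj', hiM, z, h1, h2, z', hjM'⟩
  · subst h
    rw [z] at h1
    exact absurd h1 (by decide)
  · exact hG ⟨i, p, p', q', q, j, hi, hlt, h, hj, hiM, h1, z, hjM, z', h2⟩

theorem no_cycle {m n : ℕ} (M : Fin m → Fin n → Bool)
    (hG : ¬ ContainsGamma M) (hD : ¬ ContainsDelta M) :
    ∀ k, 0 < k → ∀ (p : ℕ → Fin m) (q : ℕ → Fin n), (∀ i, p (i + k) = p i) →
      (∀ i, q (i + k) = q i) → (∀ i, ZeroC M (p i) (q i)) →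
      (∀ i, M (p i) (q (i + 1)) = true) → False := by
  intro k
  induction k using Nat.strong_induction_on with
  | _ k ih =>
  intro hk p q hp hq hC hM
  by_cases hk1 : k = 1
  · subst hk1
    have h1 := hM 0
    rw [hq 0, (hC 0).1] at h1
    exact absurd h1 (by decide)
  by_cases hk2 : k = 2
  · subst hk2
    have h2 := hM 1
    rw [hq 0] at h2
    exact no_two M hG hD _ _ _ _ (hC 0) (hC 1) (hM 0) h2
  have hmod : ∀ i L, 0 < L → (i % L + 1 < L ∧ (i + 1) % L = i % L + 1) ∨
      (i % L + 1 = L ∧ (i + 1) % L = 0) := by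
    intro i L hL
    have h1 := Nat.mod_lt i hL
    rcases Nat.lt_or_ge (i % L + 1) L with h | h
    · left
      refine ⟨h, ?_⟩
      rw [Nat.add_mod, Nat.mod_eq_of_lt (show 1 < L by omega), Nat.mod_eq_of_lt h]
    · right
      have h2 : i % L + 1 = L := by omega
      refine ⟨h2, ?_⟩
      rw [← Nat.mod_add_mod, h2, Nat.mod_self]
  -- chords of a shortest cycle
  have chord : ∀ a b, 2 ≤ b → b < k →
      M (p a) (q (a + b)) = false ∧ ¬ ZeroC M (p a) (q (a + b)) := by
    intro a b hb hbk
    constructor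
    · by_contra hne
      have hone : M (p a) (q (a + b)) = true := by simpa using hne
      refine ih (k - b + 1) (by omega) (by omega)
        (fun i => p (a + b + i % (k - b + 1))) (fun i => q (a + b + i % (k - b + 1)))
        (by intro i; simp only [Nat.add_mod_right]) (by intro i; simp only [Nat.add_mod_right])
        (fun i => hC _) ?_
      intro i
      rcases hmod i (k - b + 1) (by omega) with ⟨_, h⟩ | ⟨h0, h⟩
      · simp only [h]
        exact hM _
      · simp only [h]
        rw [show a + b + i % (k - b + 1) = a + k by omega, hp]
        exact hone
    · intro hz
      refine ih b hbk (by omega)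
        (fun i => p (a + i % b)) (fun i => if i % b = 0 then q (a + b) else q (a + i % b))
        (by intro i; simp only [Nat.add_mod_right]) (by intro i; simp only [Nat.add_mod_right])
        ?_ ?_
      · intro i
        by_cases h : i % b = 0
        · simp only [h, if_true]
          exact hz
        · simp only [h, if_false]
          exact hC _
      · intro i
        rcases hmod i b (by omega) with ⟨_, h⟩ | ⟨h0, h⟩
        · simp only [h, Nat.succ_ne_zero, if_false]
          exact hM _
        · simp only [h, if_true]
          rw [show a + b = a + i % b + 1 by omega]
          exact hM _
  obtain ⟨t, ht⟩ : ∃ t, ∀ i, p t ≤ p i := by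
    obtain ⟨x, ⟨t, rfl⟩, hx⟩ := (Set.toFinite (Set.range p)).exists_minimal ⟨p 0, 0, rfl⟩
    refine ⟨t, fun i => ?_⟩
    rcases le_total (p t) (p i) with h | h
    · exact h
    · exact hx ⟨i, rfl⟩ h
  obtain ⟨c1, c1'⟩ := chord (t + 1) (k - 1) (by omega) (by omega)
  rw [show t + 1 + (k - 1) = t + k by omega, hq] at c1 c1'
  obtain ⟨c2, c2'⟩ := chord (t + (k - 1)) 2 (by omega) (by omega)
  rw [show t + (k - 1) + 2 = t + 1 + k by omega, hq] at c2 c2'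
  have hlt : q (t + 1) < q t := by
    obtain ⟨_, _, ⟨y, hy, hyM⟩⟩ := hC (t + 1)
    obtain ⟨_, ⟨x, hx, hxM⟩, _⟩ := hC t
    by_contra hle
    exact c1' ⟨c1, ⟨x, lt_of_lt_of_le hx (ht _), hxM⟩, ⟨y, lt_of_le_of_lt (not_lt.mp hle) hy, hyM⟩⟩
  refine c2' ⟨c2, ⟨p t, lt_of_le_of_ne (ht _) ?_, hM t⟩, ⟨q t, hlt, ?_⟩⟩
  · intro h
    have := hM t
    rw [h, c2] at this
    exact absurd this (by decide)
  · have := hM (t + (k - 1))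
    rwa [show t + (k - 1) + 1 = t + k by omega, hq] at this

theorem avoid_three {m n : ℕ} (M : Fin m → Fin n → Bool)
    (hG : ¬ ContainsGamma M) (hD : ¬ ContainsDelta M) :
    ∃ E1 E2 E3 : Fin m → Fin n → Bool,
      ChainGraph E1 ∧ ChainGraph E2 ∧ ChainGraph E3 ∧
      ∀ u v, M u v = (E1 u v && E2 u v && E3 u v) := by
  classical
  let S := {c : Fin m × Fin n // ZeroC M c.1 c.2}
  let R : S → S → Prop := fun c' c => M c.1.1 c'.1.2 = true
  have wf : WellFounded R := by
    by_contra hnot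
    obtain ⟨f, hf⟩ : ∃ f : ℕ → S, ∀ i, R (f (i + 1)) (f i) := by
      rw [wellFounded_iff_isEmpty_descending_chain, not_isEmpty_iff] at hnot
      obtain ⟨f, hf⟩ := hnot
      exact ⟨f, hf⟩
    obtain ⟨x, y, hxy, he⟩ := Finite.exists_ne_map_eq_of_infinite f
    wlog hlt : x < y generalizing x y
    · exact this y x hxy.symm he.symm (by omega)
    have hpos : 0 < y - x := by omega
    refine no_cycle M hG hD (y - x) hpos
      (fun i => (f (x + i % (y - x))).1.1) (fun i => (f (x + i % (y - x))).1.2)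
      (by intro i; simp only [Nat.add_mod_right]) (by intro i; simp only [Nat.add_mod_right])
      (fun i => (f _).2) ?_
    intro i
    have key : f (x + (i + 1) % (y - x)) = f (x + i % (y - x) + 1) := by
      have h1 := Nat.mod_lt i hpos
      rw [← Nat.mod_add_mod]
      rcases Nat.lt_or_ge (i % (y - x) + 1) (y - x) with h | h
      · rw [Nat.mod_eq_of_lt h, add_assoc]
      · have h2 : i % (y - x) + 1 = y - x := by omega
        rw [h2, Nat.mod_self, show x + i % (y - x) + 1 = y by omega, Nat.add_zero, he]
    simp only [key]
    exact hf _
  have : IsWellFounded S R := ⟨wf⟩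
  let r : S → Ordinal := IsWellFounded.rank R
  have hr : ∀ c c' : S, M c.1.1 c'.1.2 = true → r c' < r c :=
    fun c c' h => IsWellFounded.rank_lt_of_rel h
  let Z : Fin m → Fin n → Prop := fun u v =>
    ∃ c c' : S, c.1.1 = u ∧ c'.1.2 = v ∧ r c ≤ r c'
  refine ⟨fun u v => decide (∃ j, v ≤ j ∧ M u j = true),
    fun u v => decide (∃ i, i ≤ u ∧ M i v = true), fun u v => decide (¬ Z u v), ?_, ?_, ?_, ?_⟩
  · intro u u'
    simp only [decide_eq_true_eq]
    by_contra hcon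
    push Not at hcon
    obtain ⟨⟨v, ⟨j, hj, hjM⟩, h1⟩, ⟨v', ⟨j', hj', hjM'⟩, h2⟩⟩ := hcon
    rcases le_total v v' with h | h
    · exact h1 j' (h.trans hj') hjM'
    · exact h2 j (h.trans hj) hjM
  · intro u u'
    simp only [decide_eq_true_eq]
    rcases le_total u u' with h | h
    · left
      rintro v ⟨i, hi, hM⟩
      exact ⟨i, hi.trans h, hM⟩
    · right
      rintro v ⟨i, hi, hM⟩
      exact ⟨i, hi.trans h, hM⟩
  · intro u u'
    simp only [decide_eq_true_eq]
    by_contra hcon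
    push Not at hcon
    obtain ⟨⟨v, h1, ⟨c, d, hc, hd, hcd⟩⟩, ⟨v', h2, ⟨c', d', hc', hd', hcd'⟩⟩⟩ := hcon
    rcases le_total (r c) (r c') with h | h
    · exact h2 ⟨c, d', hc, hd', h.trans hcd'⟩ |>.elim
    · exact h1 ⟨c', d, hc', hd, h.trans hcd⟩ |>.elim
  · intro u v
    rw [Bool.eq_iff_iff]
    simp only [Bool.and_eq_true, decide_eq_true_eq]
    constructor
    · intro h
      refine ⟨⟨⟨v, le_rfl, h⟩, ⟨u, le_rfl, h⟩⟩, ?_⟩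
      rintro ⟨c, c', rfl, rfl, hle⟩
      exact absurd (hr c c' h) (not_lt.mpr hle)
    · rintro ⟨⟨⟨j, hj, hjM⟩, ⟨i, hi, hiM⟩⟩, hZ⟩
      by_contra hne
      have hz : M u v = false := by simpa using hne
      have hiu : i ≠ u := by
        rintro rfl
        exact hne hiM
      have hjv : v ≠ j := by
        rintro rfl
        exact hne hjM
      have hC : ZeroC M u v :=
        ⟨hz, ⟨i, lt_of_le_of_ne hi hiu, hiM⟩, ⟨j, lt_of_le_of_ne hj hjv, hjM⟩⟩
      exact hZ ⟨⟨(u, v), hC⟩, ⟨(u, v), hC⟩, rfl, rfl, le_rfl⟩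

/-- Columns can be ordered so that the rows of a chain graph become prefixes. -/
theorem sort_cols {m n : ℕ} (G : Fin m → Fin n → Bool) (h : ChainGraph G) :
    ∃ τ : Equiv.Perm (Fin n), ∀ u j j', j ≤ j' → G u (τ j') = true → G u (τ j) = true := by
  classical
  let f : Fin n → ℕ := fun v => (Finset.univ.filter (fun u => G u v = false)).card
  refine ⟨Tuple.sort f, fun u j j' hj hG => ?_⟩
  have hm : f (Tuple.sort f j) ≤ f (Tuple.sort f j') := Tuple.monotone_sort f hj
  by_contra hne
  refine absurd hm (not_le.mpr (Finset.card_lt_card ?_))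
  rw [Finset.ssubset_iff_of_subset]
  · exact ⟨u, by simpa using hne, by simp [hG]⟩
  · intro u'
    simp only [Finset.mem_filter, Finset.mem_univ, true_and]
    intro hu'
    by_contra hne2
    rcases h u u' with h | h
    · have := h _ hG
      rw [hu'] at this
      exact absurd this (by decide)
    · exact hne (h _ (by simpa using hne2))

/-- Rows can be ordered so that neighborhoods increase. -/
theorem sort_rows {m n : ℕ} (G : Fin m → Fin n → Bool) (h : ChainGraph G) :
    ∃ σ : Equiv.Perm (Fin m), ∀ i i' v, i ≤ i' → G (σ i) v = true → G (σ i') v = true := by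
  classical
  let f : Fin m → ℕ := fun u => (Finset.univ.filter (fun v => G u v = true)).card
  refine ⟨Tuple.sort f, fun i i' v hi hG => ?_⟩
  have hm : f (Tuple.sort f i) ≤ f (Tuple.sort f i') := Tuple.monotone_sort f hi
  by_contra hne
  refine absurd hm (not_le.mpr (Finset.card_lt_card ?_))
  rw [Finset.ssubset_iff_of_subset]
  · exact ⟨v, by simpa using hG, by simpa using hne⟩
  · intro v'
    simp only [Finset.mem_filter, Finset.mem_univ, true_and]
    rcases h (Tuple.sort f i) (Tuple.sort f i') with h | h
    · exact absurd (h _ hG) hne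
    · exact h v'

theorem stmt_13 (m n : ℕ) (E : Fin m → Fin n → Bool) :
    (∃ E1 E2 E3 : Fin m → Fin n → Bool,
      ChainGraph E1 ∧ ChainGraph E2 ∧ ChainGraph E3 ∧
      ∀ u v, E u v = (E1 u v && E2 u v && E3 u v)) ↔
    (∃ (σ : Equiv.Perm (Fin m)) (τ : Equiv.Perm (Fin n)),
      ¬ ContainsGamma (fun i j => E (σ i) (τ j)) ∧
      ¬ ContainsDelta (fun i j => E (σ i) (τ j))) := by
  constructor
  · rintro ⟨E1, E2, E3, h1, h2, h3, hE⟩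
    obtain ⟨τ, hτ⟩ := sort_cols E1 h1
    obtain ⟨σ, hσ⟩ := sort_rows E2 h2
    have hone : ∀ u v, E u v = true → E1 u v = true ∧ E2 u v = true ∧ E3 u v = true := by
      intro u v h
      rw [hE] at h
      simpa [and_assoc] using h
    -- a zero with a one above and a one to the right is a zero of `E3`
    have hzero : ∀ i j i' j', E (σ i) (τ j) = false → i' < i → E (σ i') (τ j) = true → j < j' →
        E (σ i) (τ j') = true → E3 (σ i) (τ j) = false := by
      intro i j i' j' hz hi hiE hj hjE
      have a1 := hτ (σ i) j j' hj.le (hone _ _ hjE).1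
      have a2 := hσ i' i (τ j) hi.le (hone _ _ hiE).2.1
      rw [hE, a1, a2] at hz
      simpa using hz
    have hconf : ∀ u u' v v', E3 u v = false → E3 u' v' = false → E u v' = true →
        E u' v = true → False := by
      intro u u' v v' z z' o o'
      rcases h3 u u' with h | h
      · have := h _ (hone _ _ o).2.2
        rw [z'] at this
        exact absurd this (by decide)
      · have := h _ (hone _ _ o').2.2
        rw [z] at this
        exact absurd this (by decide)
    refine ⟨σ, τ, ?_, ?_⟩
    · rintro ⟨i1, i2, i3, j1, j2, j3, hi, hi', hj, hj', a, b, c, d, e, f⟩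
      exact hconf _ _ _ _ (hzero i2 j2 i1 j3 c hi a hj' d) (hzero i3 j1 i2 j2 e hi' b hj f) b f
    · rintro ⟨i1, i2, i3, j1, j2, j3, hi, hi', hj, hj', a, b, c, d, e, f⟩
      exact hconf _ _ _ _ (hzero i2 j1 i1 j2 b hi a hj c) (hzero i3 j2 i2 j3 e hi' c hj' f) c d
  · rintro ⟨σ, τ, hG, hD⟩
    obtain ⟨E1, E2, E3, h1, h2, h3, hE⟩ := avoid_three _ hG hD
    have tr : ∀ G : Fin m → Fin n → Bool, ChainGraph G →
        ChainGraph (fun u v => G (σ.symm u) (τ.symm v)) := by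
      intro G h u u'
      rcases h (σ.symm u) (σ.symm u') with h | h
      · exact Or.inl fun v => h _
      · exact Or.inr fun v => h _
    refine ⟨_, _, _, tr E1 h1, tr E2 h2, tr E3 h3, fun u v => ?_⟩
    have := hE (σ.symm u) (τ.symm v)
    simpa using this
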